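/- Let β ∈ (−1,1) with β ≠ σ, and let ν be the unique real root of f_β. Then, with m₁ = 1 − ν − νβ and m₃ = −β + 2νβ − 1 + 2ν from the clockwise solution formulas, one has m₁ ≠ m₃; equivalently, ν ≠ (2+β)/(3(1+β)). (This is the nondegeneracy of the clockwise Shapley orbit: the strict inequality m₁ = m₂ > m₃ can only fail at β = σ.) -/

import Mathlib

/-- The cubic governing the clockwise (Shapley) periodic orbit. -/
noncomputable def fShapley (β Z : ℝ) : ℝ :=
  (3*β^2 + 3*β + 3)*Z^3 + (2*β^3 - 2*β^2 - 5*β - 4)*Z^2 + (-β^3 + 4*β + 3)*Z - (1 + β)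

/-- Substituting `Z = (2 + β) / (3 (1 + β))` into the cubic, with denominators cleared, leaves
the minimal polynomial of the golden mean times a positive factor. -/
theorem fShapley_of_mul_eq {β Z : ℝ} (h : 3 * (1 + β) * Z = 2 + β) :
    9 * (1 + β)^3 * fShapley β Z = -(β^2 + β - 1) * (β^2 + β + 1)^2 := by
  have h2 : (3 * (1 + β) * Z)^2 = (2 + β)^2 := by rw [h]
  have h3 : (3 * (1 + β) * Z)^3 = (2 + β)^3 := by rw [h]
  unfold fShapley
  linear_combination (β^2 + β + 1) * h3
    + (1 + β) * (2*β^3 - 2*β^2 - 5*β - 4) * h2 + 3 * (1 + β)^2 * (-β^3 + 4*β + 3) * h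

/-- The golden mean is the only root of `x² + x - 1` above `-1`. -/
theorem eq_golden_mean_of_sq_add_self {x : ℝ} (hx : -1 < x) (h : x^2 + x - 1 = 0) :
    x = (Real.sqrt 5 - 1)/2 := by
  have hpos : 0 < 2 * x + 1 := by nlinarith
  have hsqrt : Real.sqrt 5 = 2 * x + 1 := by
    rw [Real.sqrt_eq_iff_mul_self_eq_of_pos hpos]
    linear_combination 4 * h
  rw [hsqrt]
  ring

/-- for β ∈ (−1,1) with β ≠ σ and ν the (unique) real root of f_β,
the clockwise solution values m₁ = 1−ν−νβ and m₃ = −β+2νβ−1+2ν are distinct;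
equivalently ν ≠ (2+β)/(3(1+β)). -/
theorem stmt9 (β ν : ℝ) (hβ : β ∈ Set.Ioo (-1 : ℝ) 1)
    (hβσ : β ≠ (Real.sqrt 5 - 1)/2) (hν : fShapley β ν = 0) :
    (1 - ν - ν*β) ≠ (-β + 2*ν*β - 1 + 2*ν) ∧ ν ≠ (2 + β)/(3*(1 + β)) := by
  have hβ1 : 0 < 1 + β := by linarith [hβ.1]
  have key : 3 * (1 + β) * ν ≠ 2 + β := fun h => by
    have hprod := fShapley_of_mul_eq h
    rw [hν, mul_zero] at hprod
    have hfac : (β^2 + β + 1)^2 ≠ 0 := by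
      have : 0 < β^2 + β + 1 := by nlinarith [sq_nonneg (2 * β + 1)]
      positivity
    have hroot := (mul_eq_zero.mp hprod.symm).resolve_right hfac
    exact hβσ (eq_golden_mean_of_sq_add_self hβ.1 (neg_eq_zero.mp hroot))
  refine ⟨fun h => key (by linear_combination -h), fun h => key ?_⟩
  rw [h]
  field_simp
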